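/- Suppose T is Σ1-sound. For each m ≥ 1, there exists no Σ1 provability predicate PR_T(x) of T such that the modal formula p → □ᵐp belongs to PL(PR_T). -/

import Mathlib

namespace PLN

/-! ### Modal formulas and the logics N⁺A_{m,n} -/

/-- Formulas of modal propositional logic. -/
inductive MFml : Type
  | var : ℕ → MFml
  | bot : MFml
  | neg : MFml → MFml
  | and : MFml → MFml → MFml
  | or : MFml → MFml → MFml
  | imp : MFml → MFml → MFml
  | box : MFml → MFml
  deriving DecidableEq

/-- `boxIter n A` is `□ⁿ A`, where `□⁰ A = A` and `□^(k+1) A = □ (□ᵏ A)`. -/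
def boxIter : ℕ → MFml → MFml
  | 0, A => A
  | k + 1, A => .box (boxIter k A)

/-- Evaluation of a modal formula under a valuation of its "propositional atoms"
(propositional variables, and boxed formulas); used to define propositional tautologies
in the modal language. -/
def MFml.evalTC (v : MFml → Prop) : MFml → Prop
  | .bot => False
  | .neg A => ¬ A.evalTC v
  | .and A B => A.evalTC v ∧ B.evalTC v
  | .or A B => A.evalTC v ∨ B.evalTC v
  | .imp A B => A.evalTC v → B.evalTC v
  | A => v A

/-- Propositional tautologies in the modal language. -/
def MTaut (A : MFml) : Prop := ∀ v, A.evalTC v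

/-- Provability in the logic `N⁺A_{m,n}`: the pure logic of necessitation `N`
(propositional tautologies, modus ponens, necessitation) together with the axiom scheme
`□ⁿA → □ᵐA` and the rule `Ros□` (from `¬□A` infer `¬□□A`). -/
inductive NAProves (m n : ℕ) : MFml → Prop
  | taut {A} : MTaut A → NAProves m n A
  | acc (A) : NAProves m n (.imp (boxIter n A) (boxIter m A))
  | mp {A B} : NAProves m n (.imp A B) → NAProves m n A → NAProves m n B
  | nec {A} : NAProves m n A → NAProves m n (.box A)
  | ros {A} : NAProves m n (.neg (.box A)) → NAProves m n (.neg (.box (.box A)))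

/-- `IsSub B A` : `B` is a subformula of `A`. -/
inductive IsSub : MFml → MFml → Prop
  | refl (A) : IsSub A A
  | neg {B A} : IsSub B A → IsSub B (.neg A)
  | andL {B A C} : IsSub B A → IsSub B (.and A C)
  | andR {B A C} : IsSub B C → IsSub B (.and A C)
  | orL {B A C} : IsSub B A → IsSub B (.or A C)
  | orR {B A C} : IsSub B C → IsSub B (.or A C)
  | impL {B A C} : IsSub B A → IsSub B (.imp A C)
  | impR {B A C} : IsSub B C → IsSub B (.imp A C)
  | box {B A} : IsSub B A → IsSub B (.box A)

/-! ### N-frames and N-models -/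

/-- An N-model on a set `W` of worlds: an N-frame (a binary relation `≺_B` on `W`
for each modal formula `B`) together with a valuation of propositional variables. -/
structure NModel (W : Type) where
  rel : MFml → W → W → Prop
  val : W → ℕ → Prop

/-- The forcing relation of an N-model:
`x ⊩ □B` iff every `y` with `x ≺_B y` satisfies `y ⊩ B`. -/
def NModel.Forces {W : Type} (M : NModel W) : W → MFml → Prop
  | x, .var p => M.val x p
  | _, .bot => False
  | x, .neg A => ¬ NModel.Forces M x A
  | x, .and A B => NModel.Forces M x A ∧ NModel.Forces M x B
  | x, .or A B => NModel.Forces M x A ∨ NModel.Forces M x B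
  | x, .imp A B => NModel.Forces M x A → NModel.Forces M x B
  | x, .box A => ∀ y, M.rel A x y → NModel.Forces M y A

/-- The relations `≺_B^k` : `x ≺_B^0 y` iff `x = y`, and
`x ≺_B^(k+1) y` iff `∃ w, x ≺_{□ᵏB} w` and `w ≺_B^k y`. -/
def NModel.relIter {W : Type} (M : NModel W) (B : MFml) : ℕ → W → W → Prop
  | 0, x, y => x = y
  | k + 1, x, y => ∃ w, M.rel (boxIter k B) x w ∧ NModel.relIter M B k w y

/-- `(m,n)`-accessibility of (the frame of) an N-model. -/
def NModel.Accessible {W : Type} (M : NModel W) (m n : ℕ) : Prop :=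
  ∀ (B : MFml) (x y : W), NModel.relIter M B m x y → NModel.relIter M B n x y

/-! ### The language of first-order arithmetic -/

/-- Terms of the language of arithmetic, with de Bruijn variables. -/
inductive ATerm : Type
  | var : ℕ → ATerm
  | zero : ATerm
  | succ : ATerm → ATerm
  | add : ATerm → ATerm → ATerm
  | mul : ATerm → ATerm → ATerm
  deriving DecidableEq

/-- Formulas of the language of arithmetic (with `≤` primitive), de Bruijn variables. -/
inductive AFml : Type
  | eq : ATerm → ATerm → AFml
  | le : ATerm → ATerm → AFml
  | neg : AFml → AFml
  | and : AFml → AFml → AFml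
  | or : AFml → AFml → AFml
  | imp : AFml → AFml → AFml
  | all : AFml → AFml
  | ex : AFml → AFml
  deriving DecidableEq

/-- Lift (shift up by one) the variables `≥ c` of a term. -/
def ATerm.lift (c : ℕ) : ATerm → ATerm
  | .var n => .var (if n < c then n else n + 1)
  | .zero => .zero
  | .succ t => .succ (t.lift c)
  | .add t s => .add (t.lift c) (s.lift c)
  | .mul t s => .mul (t.lift c) (s.lift c)

/-- Simultaneous substitution in terms. -/
def ATerm.substAll (σ : ℕ → ATerm) : ATerm → ATerm
  | .var n => σ n
  | .zero => .zero
  | .succ t => .succ (t.substAll σ)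
  | .add t s => .add (t.substAll σ) (s.substAll σ)
  | .mul t s => .mul (t.substAll σ) (s.substAll σ)

/-- Pushing a substitution under a binder. -/
def liftSub (σ : ℕ → ATerm) : ℕ → ATerm
  | 0 => .var 0
  | n + 1 => (σ n).lift 0

/-- Lift (shift up by one) the free variables `≥ c` of a formula. -/
def AFml.lift (c : ℕ) : AFml → AFml
  | .eq t s => .eq (t.lift c) (s.lift c)
  | .le t s => .le (t.lift c) (s.lift c)
  | .neg φ => .neg (φ.lift c)
  | .and φ ψ => .and (φ.lift c) (ψ.lift c)
  | .or φ ψ => .or (φ.lift c) (ψ.lift c)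
  | .imp φ ψ => .imp (φ.lift c) (ψ.lift c)
  | .all φ => .all (φ.lift (c + 1))
  | .ex φ => .ex (φ.lift (c + 1))

/-- Simultaneous (capture-avoiding) substitution in formulas. -/
def AFml.substAll (σ : ℕ → ATerm) : AFml → AFml
  | .eq t s => .eq (t.substAll σ) (s.substAll σ)
  | .le t s => .le (t.substAll σ) (s.substAll σ)
  | .neg φ => .neg (φ.substAll σ)
  | .and φ ψ => .and (φ.substAll σ) (ψ.substAll σ)
  | .or φ ψ => .or (φ.substAll σ) (ψ.substAll σ)
  | .imp φ ψ => .imp (φ.substAll σ) (ψ.substAll σ)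
  | .all φ => .all (φ.substAll (liftSub σ))
  | .ex φ => .ex (φ.substAll (liftSub σ))

def subst0Env (t : ATerm) : ℕ → ATerm
  | 0 => t
  | n + 1 => .var n

def subst2Env (t s : ATerm) : ℕ → ATerm
  | 0 => t
  | 1 => s
  | n + 2 => .var n

/-- Substitute the term `t` for the free variable `0` (decrementing other variables). -/
def AFml.subst0 (φ : AFml) (t : ATerm) : AFml := φ.substAll (subst0Env t)

/-- Substitute the terms `t`, `s` for the free variables `0`, `1` simultaneously. -/
def AFml.subst2 (φ : AFml) (t s : ATerm) : AFml := φ.substAll (subst2Env t s)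

/-- Substitute `S(var 0)` for `var 0`, leaving all other free variables unchanged. -/
def succSubst (φ : AFml) : AFml :=
  φ.substAll fun n => if n = 0 then .succ (.var 0) else .var n

/-- All variables of a term are `< c`. -/
def ATerm.FreeLt (c : ℕ) : ATerm → Prop
  | .var n => n < c
  | .zero => True
  | .succ t => t.FreeLt c
  | .add t s => t.FreeLt c ∧ s.FreeLt c
  | .mul t s => t.FreeLt c ∧ s.FreeLt c

/-- All free variables of a formula are `< c`; `FreeLt 0 φ` says that `φ` is a sentence. -/
def AFml.FreeLt (c : ℕ) : AFml → Prop
  | .eq t s => t.FreeLt c ∧ s.FreeLt c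
  | .le t s => t.FreeLt c ∧ s.FreeLt c
  | .neg φ => φ.FreeLt c
  | .and φ ψ => φ.FreeLt c ∧ ψ.FreeLt c
  | .or φ ψ => φ.FreeLt c ∧ ψ.FreeLt c
  | .imp φ ψ => φ.FreeLt c ∧ ψ.FreeLt c
  | .all φ => φ.FreeLt (c + 1)
  | .ex φ => φ.FreeLt (c + 1)

/-- The numeral `n̄`. -/
def numeral : ℕ → ATerm
  | 0 => .zero
  | n + 1 => .succ (numeral n)

/-- A Gödel numbering of terms. -/
def ATerm.code : ATerm → ℕ
  | .var n => Nat.pair 0 n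
  | .zero => Nat.pair 1 0
  | .succ t => Nat.pair 2 t.code
  | .add t s => Nat.pair 3 (Nat.pair t.code s.code)
  | .mul t s => Nat.pair 4 (Nat.pair t.code s.code)

/-- A Gödel numbering of formulas. -/
def AFml.code : AFml → ℕ
  | .eq t s => Nat.pair 0 (Nat.pair t.code s.code)
  | .le t s => Nat.pair 1 (Nat.pair t.code s.code)
  | .neg φ => Nat.pair 2 φ.code
  | .and φ ψ => Nat.pair 3 (Nat.pair φ.code ψ.code)
  | .or φ ψ => Nat.pair 4 (Nat.pair φ.code ψ.code)
  | .imp φ ψ => Nat.pair 5 (Nat.pair φ.code ψ.code)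
  | .all φ => Nat.pair 6 φ.code
  | .ex φ => Nat.pair 7 φ.code

/-- `⌜φ⌝`, the numeral of the Gödel number of `φ`. -/
def gnum (φ : AFml) : ATerm := numeral φ.code

/-- For a formula `P(x)` (with free variable `var 0`), `P.appNum φ` is `P(⌜φ⌝)`. -/
def AFml.appNum (P φ : AFml) : AFml := P.subst0 (gnum φ)

/-- Iterated application of a predicate: `iterPred P k φ = P(⌜P(⌜⋯P(⌜φ⌝)⋯⌝)⌝)` (`k` times). -/
def iterPred (P : AFml) : ℕ → AFml → AFml
  | 0, φ => φ
  | k + 1, φ => P.appNum (iterPred P k φ)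

/-! ### Satisfaction in the standard model -/

def ATerm.val (ρ : ℕ → ℕ) : ATerm → ℕ
  | .var n => ρ n
  | .zero => 0
  | .succ t => t.val ρ + 1
  | .add t s => t.val ρ + s.val ρ
  | .mul t s => t.val ρ * s.val ρ

def consEnv (a : ℕ) (ρ : ℕ → ℕ) : ℕ → ℕ
  | 0 => a
  | n + 1 => ρ n

/-- Satisfaction in the standard model `ℕ` under an environment `ρ`. -/
def AFml.Sat (ρ : ℕ → ℕ) : AFml → Prop
  | .eq t s => t.val ρ = s.val ρ
  | .le t s => t.val ρ ≤ s.val ρ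
  | .neg φ => ¬ φ.Sat ρ
  | .and φ ψ => φ.Sat ρ ∧ ψ.Sat ρ
  | .or φ ψ => φ.Sat ρ ∨ ψ.Sat ρ
  | .imp φ ψ => φ.Sat ρ → ψ.Sat ρ
  | .all φ => ∀ a, φ.Sat (consEnv a ρ)
  | .ex φ => ∃ a, φ.Sat (consEnv a ρ)

/-- `ℕ ⊨ φ`. -/
def TrueN (φ : AFml) : Prop := φ.Sat fun _ => 0

/-! ### The arithmetical hierarchy: Δ₀, Σ₁, Π₁ -/

/-- `Δ₀` formulas: every quantifier is bounded. -/
inductive IsDelta0 : AFml → Prop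
  | eq (t s : ATerm) : IsDelta0 (.eq t s)
  | le (t s : ATerm) : IsDelta0 (.le t s)
  | neg {φ} : IsDelta0 φ → IsDelta0 (.neg φ)
  | and {φ ψ} : IsDelta0 φ → IsDelta0 ψ → IsDelta0 (.and φ ψ)
  | or {φ ψ} : IsDelta0 φ → IsDelta0 ψ → IsDelta0 (.or φ ψ)
  | imp {φ ψ} : IsDelta0 φ → IsDelta0 ψ → IsDelta0 (.imp φ ψ)
  | ball {φ : AFml} (t : ATerm) : IsDelta0 φ → IsDelta0 (.all (.imp (.le (.var 0) (ATerm.lift 0 t)) φ))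
  | bex {φ : AFml} (t : ATerm) : IsDelta0 φ → IsDelta0 (.ex (.and (.le (.var 0) (ATerm.lift 0 t)) φ))

mutual
  /-- `Σ₁` formulas. -/
  inductive IsSigma1 : AFml → Prop
    | delta0 {φ} : IsDelta0 φ → IsSigma1 φ
    | and {φ ψ} : IsSigma1 φ → IsSigma1 ψ → IsSigma1 (.and φ ψ)
    | or {φ ψ} : IsSigma1 φ → IsSigma1 ψ → IsSigma1 (.or φ ψ)
    | ex {φ} : IsSigma1 φ → IsSigma1 (.ex φ)
    | negPi {φ} : IsPi1 φ → IsSigma1 (.neg φ)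
    | impPiSigma {φ ψ} : IsPi1 φ → IsSigma1 ψ → IsSigma1 (.imp φ ψ)
  /-- `Π₁` formulas. -/
  inductive IsPi1 : AFml → Prop
    | delta0 {φ} : IsDelta0 φ → IsPi1 φ
    | and {φ ψ} : IsPi1 φ → IsPi1 ψ → IsPi1 (.and φ ψ)
    | or {φ ψ} : IsPi1 φ → IsPi1 ψ → IsPi1 (.or φ ψ)
    | all {φ} : IsPi1 φ → IsPi1 (.all φ)
    | negSigma {φ} : IsSigma1 φ → IsPi1 (.neg φ)
    | impSigmaPi {φ ψ} : IsSigma1 φ → IsPi1 ψ → IsPi1 (.imp φ ψ)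
end

/-! ### A Hilbert-style proof system for first-order arithmetic -/

/-- Evaluation of an arithmetical formula under a valuation of its "propositionally atomic"
subformulas (atomic or quantified formulas); used for propositional tautologies and
tautological consequence. -/
def AFml.evalProp (v : AFml → Prop) : AFml → Prop
  | .neg φ => ¬ φ.evalProp v
  | .and φ ψ => φ.evalProp v ∧ ψ.evalProp v
  | .or φ ψ => φ.evalProp v ∨ ψ.evalProp v
  | .imp φ ψ => φ.evalProp v → ψ.evalProp v
  | φ => v φ

/-- Propositional tautologies in the language of arithmetic. -/
def ATaut (φ : AFml) : Prop := ∀ v, φ.evalProp v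

/-- `φ` is a tautological consequence of the set `X` of formulas. -/
def TC (X : Set AFml) (φ : AFml) : Prop :=
  ∀ v : AFml → Prop, (∀ ψ ∈ X, ψ.evalProp v) → φ.evalProp v

def iffF (φ ψ : AFml) : AFml := .and (.imp φ ψ) (.imp ψ φ)

/-- Hilbert-style provability from the set of axioms `Γ` in classical first-order
logic with equality. -/
inductive Proves (Γ : Set AFml) : AFml → Prop
  | ax {φ} : φ ∈ Γ → Proves Γ φ
  | taut {φ} : ATaut φ → Proves Γ φ
  | mp {φ ψ} : Proves Γ (.imp φ ψ) → Proves Γ φ → Proves Γ ψ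
  | allE (φ : AFml) (t : ATerm) : Proves Γ (.imp (.all φ) (φ.subst0 t))
  | exI (φ : AFml) (t : ATerm) : Proves Γ (.imp (φ.subst0 t) (.ex φ))
  | allImp (φ ψ : AFml) : Proves Γ (.imp (.all (.imp φ ψ)) (.imp (.all φ) (.all ψ)))
  | vacAll (φ : AFml) : Proves Γ (.imp φ (.all (AFml.lift 0 φ)))
  | exDef (φ : AFml) : Proves Γ (iffF (.ex φ) (.neg (.all (.neg φ))))
  | gen {φ} : Proves Γ φ → Proves Γ (.all φ)
  | eqRefl (t : ATerm) : Proves Γ (.eq t t)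
  | eqSubst (φ : AFml) (t s : ATerm) : Proves Γ (.imp (.eq t s) (.imp (φ.subst0 t) (φ.subst0 s)))

/-! ### Peano arithmetic -/

/-- The axioms of Peano arithmetic. -/
inductive PAax : AFml → Prop
  | succNeZero : PAax (.all (.neg (.eq (.succ (.var 0)) .zero)))
  | succInj :
      PAax (.all (.all (.imp (.eq (.succ (.var 1)) (.succ (.var 0))) (.eq (.var 1) (.var 0)))))
  | addZero : PAax (.all (.eq (.add (.var 0) .zero) (.var 0)))
  | addSucc :
      PAax (.all (.all (.eq (.add (.var 1) (.succ (.var 0))) (.succ (.add (.var 1) (.var 0))))))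
  | mulZero : PAax (.all (.eq (.mul (.var 0) .zero) .zero))
  | mulSucc :
      PAax (.all (.all (.eq (.mul (.var 1) (.succ (.var 0)))
        (.add (.mul (.var 1) (.var 0)) (.var 1)))))
  | leDef :
      PAax (.all (.all (iffF (.le (.var 1) (.var 0))
        (.ex (.eq (.add (.var 0) (.var 2)) (.var 1))))))
  | ind (φ : AFml) :
      PAax (.imp (.and (φ.subst0 .zero) (.all (.imp φ (succSubst φ)))) (.all φ))

/-- Peano arithmetic, as a set of axioms. -/
def PA : Set AFml := {φ | PAax φ}

/-- The sentence `0 = 1`. -/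
def botFml : AFml := .eq .zero (.succ .zero)

/-- `t < s`, as the formula `S(t) ≤ s`. -/
def ltF (t s : ATerm) : AFml := .le (.succ t) s

/-- `Δ₁(PA)` formulas: `Σ₁` formulas which are `PA`-provably equivalent to a `Π₁` formula. -/
def IsDelta1PA (φ : AFml) : Prop :=
  IsSigma1 φ ∧ ∃ ψ, IsPi1 ψ ∧ Proves PA (iffF φ ψ)

/-! ### Theories, provability predicates, arithmetical interpretations -/

/-- `Tax` is primitive recursively axiomatized (via the Gödel numbering). -/
def PrAxiomatized (Tax : Set AFml) : Prop :=
  ∃ p : ℕ → Bool, Primrec p ∧ ∀ φ : AFml, φ ∈ Tax ↔ p φ.code = true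

/-- `Σ₁`-soundness: every `T`-provable `Σ₁` sentence is true in `ℕ`. -/
def Sigma1Sound (Tax : Set AFml) : Prop :=
  ∀ φ : AFml, IsSigma1 φ → φ.FreeLt 0 → Proves Tax φ → TrueN φ

/-- `P` is a provability predicate of `T`: a formula `P(x)` with at most the free
variable `x` such that for every formula `φ`, `T ⊢ φ` iff `PA ⊢ P(⌜φ⌝)`. -/
def IsProvPred (Tax : Set AFml) (P : AFml) : Prop :=
  P.FreeLt 1 ∧ ∀ φ : AFml, Proves Tax φ ↔ Proves PA (P.appNum φ)

/-- `f` is an arithmetical interpretation based on the predicate `P`. -/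
def IsInterp (P : AFml) (f : MFml → AFml) : Prop :=
  (∀ i, (f (.var i)).FreeLt 0) ∧
  f .bot = botFml ∧
  (∀ A, f (.neg A) = .neg (f A)) ∧
  (∀ A B, f (.and A B) = .and (f A) (f B)) ∧
  (∀ A B, f (.or A B) = .or (f A) (f B)) ∧
  (∀ A B, f (.imp A B) = .imp (f A) (f B)) ∧
  (∀ A, f (.box A) = P.appNum (f A))

/-- The provability logic of the predicate `P` (relative to the theory `Tax`). -/
def PL (Tax : Set AFml) (P : AFml) : Set MFml :=
  {A | ∀ f : MFml → AFml, IsInterp P f → Proves Tax (f A)}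

/-- The formulas with a `T`-proof of code `≤ s` (relative to a proof enumeration `prf`). -/
def PTset (prf : ℕ → Option AFml) (s : ℕ) : Set AFml :=
  {φ | ∃ y ≤ s, prf y = some φ}

/-!
Let `T` be `Σ₁`-sound and let `P` be a `Σ₁` provability predicate of `T` with
`p → □ᵐp ∈ PL(P)`, where `m ≥ 1`. Since `PA` proves every true `Σ₁` sentence, `T ⊢ P(⌜φ⌝)` is
equivalent both to `T ⊢ φ` and to the truth of `P(⌜φ⌝)`, and `T` has the disjunction property for
`Σ₁` sentences. Interpreting `p` by `φ` and by `¬φ` gives `T ⊢ □ᵐφ ∨ □ᵐ¬φ`, a disjunction of `Σ₁`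
sentences, so `T` proves `φ` or `¬φ`: thus `T` is complete. This contradicts Gödel's first
incompleteness theorem, since the truth of the `Σ₁` formula `P` coincides with provability in `T`.
-/

/-! ### Substitution -/

@[simp] lemma lift_numeral (c n : ℕ) : (numeral n).lift c = numeral n := by
  induction n <;> simp_all [numeral, ATerm.lift]

@[simp] lemma substAll_numeral (σ : ℕ → ATerm) (n : ℕ) : (numeral n).substAll σ = numeral n := by
  induction n <;> simp_all [numeral, ATerm.substAll]

@[simp] lemma val_numeral (ρ : ℕ → ℕ) (n : ℕ) : (numeral n).val ρ = n := by
  induction n <;> simp_all [numeral, ATerm.val]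

@[simp] lemma freeLt_numeral (c n : ℕ) : (numeral n).FreeLt c := by
  induction n <;> simp_all [numeral, ATerm.FreeLt]

namespace ATerm

lemma substAll_liftSub_lift (t : ATerm) (σ : ℕ → ATerm) :
    (t.lift 0).substAll (liftSub σ) = (t.substAll σ).lift 0 := by
  induction t <;> simp_all [lift, substAll, liftSub]

lemma substAll_subst0Env_lift (t s : ATerm) : (t.lift 0).substAll (subst0Env s) = t := by
  induction t <;> simp_all [lift, substAll, subst0Env]

lemma substAll_substAll (t : ATerm) (σ τ : ℕ → ATerm) :
    (t.substAll σ).substAll τ = t.substAll fun n => (σ n).substAll τ := by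
  induction t <;> simp_all [substAll]

lemma substAll_var (t : ATerm) : t.substAll var = t := by
  induction t <;> simp_all [substAll]

lemma FreeLt.substAll_congr {t : ATerm} {c : ℕ} (ht : t.FreeLt c) {σ τ : ℕ → ATerm}
    (h : ∀ n < c, σ n = τ n) : t.substAll σ = t.substAll τ := by
  induction t <;> simp_all [ATerm.substAll, FreeLt]

lemma FreeLt.lift {t : ATerm} {c : ℕ} (ht : t.FreeLt c) : (t.lift 0).FreeLt (c + 1) := by
  induction t <;> simp_all [ATerm.lift, FreeLt]

lemma FreeLt.substAll {t : ATerm} {c d : ℕ} (ht : t.FreeLt c) {σ : ℕ → ATerm}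
    (hσ : ∀ n < c, (σ n).FreeLt d) : (t.substAll σ).FreeLt d := by
  induction t <;> simp_all [ATerm.substAll, FreeLt]

lemma val_lift_consEnv (t : ATerm) (a : ℕ) (ρ : ℕ → ℕ) :
    (t.lift 0).val (consEnv a ρ) = t.val ρ := by
  induction t <;> simp_all [lift, val, consEnv]

lemma val_substAll (t : ATerm) (σ : ℕ → ATerm) (ρ : ℕ → ℕ) :
    (t.substAll σ).val ρ = t.val fun n => (σ n).val ρ := by
  induction t <;> simp_all [substAll, val]

end ATerm

section liftSub

variable {σ τ : ℕ → ATerm} {c d : ℕ}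

lemma substAll_liftSub (σ τ : ℕ → ATerm) :
    (fun n => (liftSub σ n).substAll (liftSub τ)) = liftSub fun n => (σ n).substAll τ := by
  funext n
  cases n with
  | zero => rfl
  | succ n => exact ATerm.substAll_liftSub_lift _ _

lemma liftSub_var : liftSub ATerm.var = ATerm.var := by
  funext n
  cases n <;> simp [liftSub, ATerm.lift]

lemma liftSub_congr (h : ∀ n < c, σ n = τ n) : ∀ n < c + 1, liftSub σ n = liftSub τ n := by
  rintro (_ | n) hn
  · rfl
  · exact congrArg (ATerm.lift 0) (h n (Nat.lt_of_succ_lt_succ hn))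

lemma freeLt_liftSub (hσ : ∀ n < c, (σ n).FreeLt d) :
    ∀ n < c + 1, (liftSub σ n).FreeLt (d + 1) := by
  rintro (_ | n) hn
  · exact Nat.succ_pos d
  · exact (hσ n (Nat.lt_of_succ_lt_succ hn)).lift

lemma val_liftSub (σ : ℕ → ATerm) (a : ℕ) (ρ : ℕ → ℕ) :
    (fun n => (liftSub σ n).val (consEnv a ρ)) = consEnv a fun n => (σ n).val ρ := by
  funext n
  cases n with
  | zero => rfl
  | succ n => exact ATerm.val_lift_consEnv _ _ _

end liftSub

namespace AFml

lemma substAll_substAll (φ : AFml) (σ τ : ℕ → ATerm) :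
    (φ.substAll σ).substAll τ = φ.substAll fun n => (σ n).substAll τ := by
  induction φ generalizing σ τ <;>
    simp_all [substAll, ATerm.substAll_substAll, substAll_liftSub]

lemma substAll_var (φ : AFml) : φ.substAll ATerm.var = φ := by
  induction φ <;> simp_all [substAll, ATerm.substAll_var, liftSub_var]

lemma FreeLt.substAll_congr {φ : AFml} {c : ℕ} (hφ : φ.FreeLt c) {σ τ : ℕ → ATerm}
    (h : ∀ n < c, σ n = τ n) : φ.substAll σ = φ.substAll τ := by
  induction φ generalizing c σ τ with
  | eq | le => simp only [substAll, hφ.1.substAll_congr h, hφ.2.substAll_congr h]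
  | neg _ ih => simp only [substAll, ih hφ h]
  | and _ _ ih₁ ih₂ | or _ _ ih₁ ih₂ | imp _ _ ih₁ ih₂ =>
    simp only [substAll, ih₁ hφ.1 h, ih₂ hφ.2 h]
  | all _ ih | ex _ ih => simp only [substAll, ih hφ (liftSub_congr h)]

lemma FreeLt.substAll_eq_self {φ : AFml} (hφ : φ.FreeLt 0) (σ : ℕ → ATerm) :
    φ.substAll σ = φ := by
  rw [hφ.substAll_congr (τ := ATerm.var) (by simp), substAll_var]

lemma FreeLt.substAll {φ : AFml} {c d : ℕ} (hφ : φ.FreeLt c) {σ : ℕ → ATerm}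
    (hσ : ∀ n < c, (σ n).FreeLt d) : (φ.substAll σ).FreeLt d := by
  induction φ generalizing c d σ with
  | eq | le => exact ⟨hφ.1.substAll hσ, hφ.2.substAll hσ⟩
  | neg _ ih => exact ih hφ hσ
  | and _ _ ih₁ ih₂ | or _ _ ih₁ ih₂ | imp _ _ ih₁ ih₂ => exact ⟨ih₁ hφ.1 hσ, ih₂ hφ.2 hσ⟩
  | all _ ih | ex _ ih => exact ih hφ (freeLt_liftSub hσ)

lemma FreeLt.mono {φ : AFml} {c d : ℕ} (hφ : φ.FreeLt c) (hcd : c ≤ d) : φ.FreeLt d := by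
  simpa only [substAll_var] using
    hφ.substAll (σ := ATerm.var) (d := d) fun _ hn => Nat.lt_of_lt_of_le hn hcd

lemma FreeLt.appNum {P : AFml} (hP : P.FreeLt 1) (φ : AFml) : (P.appNum φ).FreeLt 0 := by
  refine FreeLt.substAll hP fun n hn => ?_
  obtain rfl : n = 0 := by omega
  exact freeLt_numeral _ _

lemma sat_substAll (φ : AFml) (σ : ℕ → ATerm) (ρ : ℕ → ℕ) :
    (φ.substAll σ).Sat ρ ↔ φ.Sat fun n => (σ n).val ρ := by
  induction φ generalizing σ ρ <;>
    simp_all [substAll, Sat, ATerm.val_substAll, val_liftSub]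

lemma sat_subst0 (φ : AFml) (t : ATerm) (ρ : ℕ → ℕ) :
    (φ.subst0 t).Sat ρ ↔ φ.Sat (consEnv (t.val ρ) ρ) := by
  rw [subst0, sat_substAll]
  exact iff_of_eq (congrArg φ.Sat (funext fun | 0 => rfl | _ + 1 => rfl))

lemma sat_subst2 (φ : AFml) (t s : ATerm) (ρ : ℕ → ℕ) :
    (φ.subst2 t s).Sat ρ ↔ φ.Sat (consEnv (t.val ρ) (consEnv (s.val ρ) ρ)) := by
  rw [subst2, sat_substAll]
  exact iff_of_eq (congrArg φ.Sat (funext fun | 0 => rfl | 1 => rfl | _ + 2 => rfl))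

end AFml

lemma trueN_appNum (P φ : AFml) : TrueN (P.appNum φ) ↔ P.Sat (consEnv φ.code fun _ => 0) := by
  rw [TrueN, AFml.appNum, AFml.sat_subst0, gnum, val_numeral]

lemma IsDelta0.substAll {φ : AFml} (hφ : IsDelta0 φ) (σ : ℕ → ATerm) :
    IsDelta0 (φ.substAll σ) := by
  induction hφ generalizing σ with
  | eq => exact .eq _ _
  | le => exact .le _ _
  | neg _ ih => exact .neg (ih σ)
  | and _ _ ih₁ ih₂ => exact .and (ih₁ σ) (ih₂ σ)
  | or _ _ ih₁ ih₂ => exact .or (ih₁ σ) (ih₂ σ)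
  | imp _ _ ih₁ ih₂ => exact .imp (ih₁ σ) (ih₂ σ)
  | ball t _ ih =>
    simp only [AFml.substAll, ATerm.substAll_liftSub_lift]
    exact .ball _ (ih _)
  | bex t _ ih =>
    simp only [AFml.substAll, ATerm.substAll_liftSub_lift]
    exact .bex _ (ih _)

mutual

theorem IsSigma1.substAll {φ : AFml} (hφ : IsSigma1 φ) (σ : ℕ → ATerm) :
    IsSigma1 (φ.substAll σ) := by
  cases hφ with
  | delta0 h => exact .delta0 (h.substAll σ)
  | and h₁ h₂ => exact .and (h₁.substAll σ) (h₂.substAll σ)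
  | or h₁ h₂ => exact .or (h₁.substAll σ) (h₂.substAll σ)
  | ex h => exact .ex (h.substAll _)
  | negPi h => exact .negPi (h.substAll σ)
  | impPiSigma h₁ h₂ => exact .impPiSigma (h₁.substAll σ) (h₂.substAll σ)

theorem IsPi1.substAll {φ : AFml} (hφ : IsPi1 φ) (σ : ℕ → ATerm) : IsPi1 (φ.substAll σ) := by
  cases hφ with
  | delta0 h => exact .delta0 (h.substAll σ)
  | and h₁ h₂ => exact .and (h₁.substAll σ) (h₂.substAll σ)
  | or h₁ h₂ => exact .or (h₁.substAll σ) (h₂.substAll σ)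
  | all h => exact .all (h.substAll _)
  | negSigma h => exact .negSigma (h.substAll σ)
  | impSigmaPi h₁ h₂ => exact .impSigmaPi (h₁.substAll σ) (h₂.substAll σ)

end

/-- The closed term obtained from `t` by replacing each variable `n` by the numeral of `ρ n`. -/
def ATerm.inst (ρ : ℕ → ℕ) (t : ATerm) : ATerm := t.substAll fun n => numeral (ρ n)

/-- The sentence obtained from `φ` by replacing each free variable `n` by the numeral of `ρ n`. -/
def AFml.inst (ρ : ℕ → ℕ) (φ : AFml) : AFml := φ.substAll fun n => numeral (ρ n)

/-- The formula obtained from `φ` by keeping the free variable `0` and replacing each free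
variable `n + 1` by the numeral of `ρ n`; thus `(∀ φ).inst ρ` is `∀ (φ.instTail ρ)`. -/
def AFml.instTail (ρ : ℕ → ℕ) (φ : AFml) : AFml := φ.substAll (liftSub fun n => numeral (ρ n))

lemma ATerm.lift_inst (t : ATerm) (ρ : ℕ → ℕ) (c : ℕ) : (t.inst ρ).lift c = t.inst ρ := by
  induction t <;> simp_all [inst, lift, ATerm.substAll]

namespace AFml

lemma subst0_numeral_instTail (φ : AFml) (ρ : ℕ → ℕ) (a : ℕ) :
    (φ.instTail ρ).subst0 (numeral a) = φ.inst (consEnv a ρ) := by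
  rw [subst0, instTail, substAll_substAll, inst]
  congr 1
  funext n
  cases n <;> simp [liftSub, ATerm.substAll, subst0Env, consEnv]

lemma subst0_var_instTail (φ : AFml) (ρ : ℕ → ℕ) :
    (φ.instTail ρ).subst0 (.var 0) = φ.instTail ρ := by
  rw [subst0, instTail, substAll_substAll]
  congr 1
  funext n
  cases n <;> simp [liftSub, ATerm.substAll, subst0Env]

lemma FreeLt.sat_congr {φ : AFml} {c : ℕ} (hφ : φ.FreeLt c) {ρ ρ' : ℕ → ℕ}
    (h : ∀ n < c, ρ n = ρ' n) : φ.Sat ρ ↔ φ.Sat ρ' := by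
  have trueN_inst (ρ : ℕ → ℕ) : TrueN (φ.inst ρ) ↔ φ.Sat ρ := by
    simp only [TrueN, inst, sat_substAll, val_numeral]
  have inst_congr : φ.inst ρ = φ.inst ρ' :=
    hφ.substAll_congr fun n hn => congrArg numeral (h n hn)
  rw [← trueN_inst, inst_congr, trueN_inst]

end AFml

/-! ### Derivations in first-order logic with equality -/

section Proves

variable {Γ : Set AFml}

lemma Proves.mono {Δ : Set AFml} (hΓΔ : Γ ⊆ Δ) {φ : AFml} (h : Proves Γ φ) : Proves Δ φ := by
  induction h with
  | ax h => exact .ax (hΓΔ h)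
  | taut h => exact .taut h
  | mp _ _ ih₁ ih₂ => exact .mp ih₁ ih₂
  | allE φ t => exact .allE φ t
  | exI φ t => exact .exI φ t
  | allImp φ ψ => exact .allImp φ ψ
  | vacAll φ => exact .vacAll φ
  | exDef φ => exact .exDef φ
  | gen _ ih => exact .gen ih
  | eqRefl t => exact .eqRefl t
  | eqSubst φ t s => exact .eqSubst φ t s

lemma Proves.taut_mp₁ {φ₁ ψ : AFml} (h₁ : Proves Γ φ₁)
    (h : ∀ v, φ₁.evalProp v → ψ.evalProp v) : Proves Γ ψ :=
  .mp (.taut (φ := .imp φ₁ ψ) h) h₁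

lemma Proves.taut_mp₂ {φ₁ φ₂ ψ : AFml} (h₁ : Proves Γ φ₁) (h₂ : Proves Γ φ₂)
    (h : ∀ v, φ₁.evalProp v → φ₂.evalProp v → ψ.evalProp v) : Proves Γ ψ :=
  .mp (h₁.taut_mp₁ (ψ := .imp φ₂ ψ) h) h₂

lemma Proves.taut_mp₃ {φ₁ φ₂ φ₃ ψ : AFml} (h₁ : Proves Γ φ₁) (h₂ : Proves Γ φ₂)
    (h₃ : Proves Γ φ₃)
    (h : ∀ v, φ₁.evalProp v → φ₂.evalProp v → φ₃.evalProp v → ψ.evalProp v) : Proves Γ ψ :=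
  .mp (h₁.taut_mp₂ (ψ := .imp φ₃ ψ) h₂ h) h₃

lemma Proves.all_subst0 {φ : AFml} (h : Proves Γ (.all φ)) (t : ATerm) :
    Proves Γ (φ.subst0 t) :=
  .mp (.allE φ t) h

lemma Proves.ex_imp {φ ψ : AFml} (h : Proves Γ (.imp φ (ψ.lift 0))) :
    Proves Γ (.imp (.ex φ) ψ) := by
  have contrapositive : Proves Γ (.imp (.neg (ψ.lift 0)) (.neg φ)) := h.taut_mp₁ fun _ => mt
  have distribute := Proves.mp (.allImp _ _) (.gen contrapositive)
  have vacuous : Proves Γ (.imp (.neg ψ) (.all (.neg (ψ.lift 0)))) := .vacAll (.neg ψ)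
  exact distribute.taut_mp₃ vacuous (.exDef φ) fun v => by
    simp only [iffF, AFml.evalProp]; tauto

lemma Proves.not_ex {φ : AFml} (h : Proves Γ (.neg φ)) : Proves Γ (.neg (.ex φ)) :=
  (Proves.gen h).taut_mp₂ (.exDef φ) fun _ hall hdef hex => hdef.1 hex hall

variable {t t' s s' : ATerm}

lemma Proves.eq_symm_imp (t s : ATerm) : Proves Γ (.imp (.eq t s) (.eq s t)) := by
  have h := Proves.eqSubst (Γ := Γ) (.eq (.var 0) (t.lift 0)) t s
  simp only [AFml.subst0, AFml.substAll, ATerm.substAll, ATerm.substAll_subst0Env_lift,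
    subst0Env] at h
  exact h.taut_mp₂ (.eqRefl t) fun _ hsubst hrefl heq => hsubst heq hrefl

lemma Proves.eq_symm (h : Proves Γ (.eq t s)) : Proves Γ (.eq s t) :=
  .mp (eq_symm_imp t s) h

lemma Proves.eq_left_imp (t t' s : ATerm) :
    Proves Γ (.imp (.eq t t') (.imp (.eq t s) (.eq t' s))) := by
  simpa only [AFml.subst0, AFml.substAll, ATerm.substAll, ATerm.substAll_subst0Env_lift,
    subst0Env] using Proves.eqSubst (Γ := Γ) (.eq (.var 0) (s.lift 0)) t t'

lemma Proves.eq_trans {u : ATerm} (h : Proves Γ (.eq t s)) (h' : Proves Γ (.eq s u)) :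
    Proves Γ (.eq t u) :=
  .mp (.mp (eq_left_imp s t u) h.eq_symm) h'

lemma Proves.eq_congr_imp (ht : Proves Γ (.eq t t')) (hs : Proves Γ (.eq s s')) :
    Proves Γ (.imp (.eq t s) (.eq t' s')) := by
  have right := Proves.mp (.eqSubst (.eq (t'.lift 0) (.var 0)) s s') hs
  simp only [AFml.subst0, AFml.substAll, ATerm.substAll, ATerm.substAll_subst0Env_lift,
    subst0Env] at right
  exact (Proves.mp (eq_left_imp t t' s) ht).taut_mp₂ right fun _ hl hr => hr ∘ hl

lemma Proves.le_congr_imp (ht : Proves Γ (.eq t t')) (hs : Proves Γ (.eq s s')) :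
    Proves Γ (.imp (.le t s) (.le t' s')) := by
  have left := Proves.mp (.eqSubst (.le (.var 0) (s.lift 0)) t t') ht
  have right := Proves.mp (.eqSubst (.le (t'.lift 0) (.var 0)) s s') hs
  simp only [AFml.subst0, AFml.substAll, ATerm.substAll, ATerm.substAll_subst0Env_lift,
    subst0Env] at left right
  exact left.taut_mp₂ right fun _ hl hr => hr ∘ hl

lemma Proves.eq_substAll (u : ATerm) (h : Proves Γ (.eq t s)) :
    Proves Γ (.eq (u.substAll (subst0Env t)) (u.substAll (subst0Env s))) := by
  have := Proves.mp (.eqSubst (.eq ((u.substAll (subst0Env t)).lift 0) u) t s) h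
  simp only [AFml.subst0, AFml.substAll, ATerm.substAll_subst0Env_lift] at this
  exact .mp this (.eqRefl _)

lemma Proves.eq_succ (h : Proves Γ (.eq t s)) : Proves Γ (.eq (.succ t) (.succ s)) :=
  h.eq_substAll (.succ (.var 0))

lemma Proves.eq_add (ht : Proves Γ (.eq t t')) (hs : Proves Γ (.eq s s')) :
    Proves Γ (.eq (.add t s) (.add t' s')) := by
  have left := ht.eq_substAll (.add (.var 0) (s.lift 0))
  have right := hs.eq_substAll (.add (t'.lift 0) (.var 0))
  simp only [ATerm.substAll, ATerm.substAll_subst0Env_lift, subst0Env] at left right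
  exact left.eq_trans right

lemma Proves.eq_mul (ht : Proves Γ (.eq t t')) (hs : Proves Γ (.eq s s')) :
    Proves Γ (.eq (.mul t s) (.mul t' s')) := by
  have left := ht.eq_substAll (.mul (.var 0) (s.lift 0))
  have right := hs.eq_substAll (.mul (t'.lift 0) (.var 0))
  simp only [ATerm.substAll, ATerm.substAll_subst0Env_lift, subst0Env] at left right
  exact left.eq_trans right

end Proves

/-! ### Peano arithmetic -/

namespace PA

lemma proves_succ_ne_zero (t : ATerm) : Proves PA (.neg (.eq (.succ t) .zero)) :=
  (Proves.ax PAax.succNeZero).all_subst0 t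

lemma proves_succ_inj (t s : ATerm) :
    Proves PA (.imp (.eq (.succ t) (.succ s)) (.eq t s)) := by
  simpa only [AFml.subst0, AFml.substAll, ATerm.substAll, subst0Env, liftSub,
    ATerm.substAll_subst0Env_lift] using
    ((Proves.ax (Γ := PA) PAax.succInj).all_subst0 t).all_subst0 s

lemma proves_add_zero (t : ATerm) : Proves PA (.eq (.add t .zero) t) :=
  (Proves.ax PAax.addZero).all_subst0 t

lemma proves_add_succ (t s : ATerm) :
    Proves PA (.eq (.add t (.succ s)) (.succ (.add t s))) := by
  simpa only [AFml.subst0, AFml.substAll, ATerm.substAll, subst0Env, liftSub,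
    ATerm.substAll_subst0Env_lift] using
    ((Proves.ax (Γ := PA) PAax.addSucc).all_subst0 t).all_subst0 s

lemma proves_mul_zero (t : ATerm) : Proves PA (.eq (.mul t .zero) .zero) :=
  (Proves.ax PAax.mulZero).all_subst0 t

lemma proves_mul_succ (t s : ATerm) :
    Proves PA (.eq (.mul t (.succ s)) (.add (.mul t s) t)) := by
  simpa only [AFml.subst0, AFml.substAll, ATerm.substAll, subst0Env, liftSub,
    ATerm.substAll_subst0Env_lift] using
    ((Proves.ax (Γ := PA) PAax.mulSucc).all_subst0 t).all_subst0 s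

lemma proves_le_iff (t s : ATerm) :
    Proves PA (iffF (.le t s) (.ex (.eq (.add (.var 0) (t.lift 0)) (s.lift 0)))) := by
  simpa only [AFml.subst0, AFml.substAll, ATerm.substAll, subst0Env, liftSub, iffF,
    ATerm.substAll_subst0Env_lift, ATerm.substAll_liftSub_lift] using
    ((Proves.ax (Γ := PA) PAax.leDef).all_subst0 t).all_subst0 s

lemma proves_induction {φ : AFml} (h_zero : Proves PA (φ.subst0 .zero))
    (h_succ : Proves PA (.imp φ (succSubst φ))) : Proves PA (.all φ) :=
  (Proves.ax (PAax.ind φ)).taut_mp₃ h_zero (.gen h_succ) fun _ hind h0 hs => hind ⟨h0, hs⟩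

lemma proves_zero_or_succ (t : ATerm) :
    Proves PA (.or (.eq t .zero) (.ex (.eq (t.lift 0) (.succ (.var 0))))) := by
  have h : Proves PA (.all (.or (.eq (.var 0) .zero) (.ex (.eq (.var 1) (.succ (.var 0)))))) := by
    refine proves_induction ?_ ?_
    · exact (Proves.eqRefl .zero).taut_mp₁ fun _ => .inl
    · have witness : Proves PA (.ex (.eq (.succ (.var 1)) (.succ (.var 0)))) :=
        .mp (.exI (.eq (.succ (.var 1)) (.succ (.var 0))) (.var 0)) (.eqRefl _)
      exact witness.taut_mp₁ fun _ h _ => .inr h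
  exact h.all_subst0 t

lemma proves_of_cases {t : ATerm} {ψ : AFml} (h_zero : Proves PA (.imp (.eq t .zero) ψ))
    (h_succ : Proves PA (.imp (.eq (t.lift 0) (.succ (.var 0))) (ψ.lift 0))) : Proves PA ψ :=
  (proves_zero_or_succ t).taut_mp₃ h_zero h_succ.ex_imp fun _ h h0 hs => h.elim h0 hs

lemma proves_add_numeral (a b : ℕ) :
    Proves PA (.eq (.add (numeral a) (numeral b)) (numeral (a + b))) := by
  induction b with
  | zero => exact proves_add_zero _
  | succ b ih => exact (proves_add_succ _ _).eq_trans ih.eq_succ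

lemma proves_mul_numeral (a b : ℕ) :
    Proves PA (.eq (.mul (numeral a) (numeral b)) (numeral (a * b))) := by
  induction b with
  | zero => exact proves_mul_zero _
  | succ b ih =>
    exact ((proves_mul_succ _ _).eq_trans (ih.eq_add (.eqRefl _))).eq_trans
      (proves_add_numeral _ _)

lemma proves_inst_eq_val (t : ATerm) (ρ : ℕ → ℕ) :
    Proves PA (.eq (t.inst ρ) (numeral (t.val ρ))) := by
  induction t with
  | var => exact .eqRefl _
  | zero => exact .eqRefl _
  | succ t ih => exact ih.eq_succ
  | add t s iht ihs => exact (iht.eq_add ihs).eq_trans (proves_add_numeral _ _)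
  | mul t s iht ihs => exact (iht.eq_mul ihs).eq_trans (proves_mul_numeral _ _)

lemma proves_numeral_ne {a b : ℕ} (h : a ≠ b) :
    Proves PA (.neg (.eq (numeral a) (numeral b))) := by
  induction a generalizing b with
  | zero =>
    obtain ⟨b, rfl⟩ := Nat.exists_eq_succ_of_ne_zero h.symm
    exact (Proves.eq_symm_imp _ _).taut_mp₂ (proves_succ_ne_zero (numeral b)) fun _ => mt
  | succ a ih =>
    cases b with
    | zero => exact proves_succ_ne_zero _
    | succ b =>
      exact (proves_succ_inj _ _).taut_mp₂ (ih (by omega)) fun _ => mt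

lemma proves_numeral_le {a b : ℕ} (h : a ≤ b) : Proves PA (.le (numeral a) (numeral b)) := by
  obtain ⟨d, rfl⟩ := Nat.exists_eq_add_of_le' h
  have witness : Proves PA
      (.ex (.eq (.add (.var 0) ((numeral a).lift 0)) ((numeral (d + a)).lift 0))) := by
    refine .mp (.exI _ (numeral d)) ?_
    simpa only [AFml.subst0, AFml.substAll, ATerm.substAll, subst0Env,
      ATerm.substAll_subst0Env_lift] using proves_add_numeral d a
  exact (proves_le_iff _ _).taut_mp₂ witness fun _ hiff => hiff.2

end PA

/-- The disjunction `t = 0 ∨ t = 1 ∨ ⋯ ∨ t = k`. -/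
def eqSomeNumeral (t : ATerm) : ℕ → AFml
  | 0 => .eq t .zero
  | k + 1 => .or (eqSomeNumeral t k) (.eq t (numeral (k + 1)))

lemma lift_eqSomeNumeral (t : ATerm) (k : ℕ) :
    (eqSomeNumeral t k).lift 0 = eqSomeNumeral (t.lift 0) k := by
  induction k <;> simp_all [eqSomeNumeral, AFml.lift, ATerm.lift]

lemma Proves.eqSomeNumeral_of_eq_zero {Γ : Set AFml} (t : ATerm) (k : ℕ) :
    Proves Γ (.imp (.eq t .zero) (eqSomeNumeral t k)) := by
  induction k with
  | zero => exact .taut fun _ => id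
  | succ k ih => exact ih.taut_mp₁ fun _ h h0 => .inl (h h0)

lemma Proves.eqSomeNumeral_imp {Γ : Set AFml} {t : ATerm} {k : ℕ} {ψ : AFml}
    (h : ∀ a ≤ k, Proves Γ (.imp (.eq t (numeral a)) ψ)) :
    Proves Γ (.imp (eqSomeNumeral t k) ψ) := by
  induction k with
  | zero => exact h 0 le_rfl
  | succ k ih =>
    exact (ih fun a ha => h a (by omega)).taut_mp₂ (h (k + 1) le_rfl)
      fun _ hlt heq hor => hor.elim hlt heq

lemma Proves.eqSomeNumeral_of_eq_numeral {Γ : Set AFml} (t : ATerm) {a k : ℕ} (h : a ≤ k) :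
    Proves Γ (.imp (.eq t (numeral a)) (eqSomeNumeral t k)) := by
  induction k with
  | zero => obtain rfl := Nat.le_zero.1 h; exact .taut fun _ => id
  | succ k ih =>
    obtain hle | rfl := Nat.le_succ_iff.1 h
    · exact (ih hle).taut_mp₁ fun _ h h' => .inl (h h')
    · exact .taut fun _ => .inr

namespace PA

lemma proves_eqSomeNumeral_succ (x y : ATerm) (k : ℕ) :
    Proves PA (.imp (.eq x (.succ y)) (.imp (eqSomeNumeral y k) (eqSomeNumeral x (k + 1)))) := by
  have h : Proves PA
      (.imp (eqSomeNumeral y k) (.imp (.eq x (.succ y)) (eqSomeNumeral x (k + 1)))) := by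
    refine Proves.eqSomeNumeral_imp fun a ha => ?_
    have rewrite_y := Proves.eqSubst (Γ := PA) (.eq (x.lift 0) (.succ (.var 0))) y (numeral a)
    simp only [AFml.subst0, AFml.substAll, ATerm.substAll, subst0Env,
      ATerm.substAll_subst0Env_lift] at rewrite_y
    exact rewrite_y.taut_mp₂
      (Proves.eqSomeNumeral_of_eq_numeral x (a := a + 1) (Nat.succ_le_succ ha))
      fun _ hy hx hya hxy => hx (hy hya hxy)
  exact h.taut_mp₁ fun _ h hx hy => h hy hx

lemma proves_succ_add_eq (x y z w : ATerm) :
    Proves PA (.imp (.eq x (.succ y))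
      (.imp (.eq (.add z x) w) (.eq (.succ (.add z y)) w))) := by
  have rewrite_x := Proves.eqSubst (Γ := PA) (.eq (.add (z.lift 0) (.var 0)) (w.lift 0)) x (.succ y)
  simp only [AFml.subst0, AFml.substAll, ATerm.substAll, subst0Env,
    ATerm.substAll_subst0Env_lift] at rewrite_x
  exact rewrite_x.taut_mp₂ (.mp (.eq_left_imp _ _ w) (proves_add_succ z y))
    fun _ hx hadd hxy hzx => hadd (hx hxy hzx)

lemma proves_eqSomeNumeral_of_add_eq (x z : ATerm) (k : ℕ) :
    Proves PA (.imp (.eq (.add z x) (numeral k)) (eqSomeNumeral x k)) := by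
  induction k generalizing x z with
  | zero =>
    refine proves_of_cases (t := x) (.taut fun _ h _ => h) ?_
    exact (proves_succ_add_eq (x.lift 0) (.var 0) (z.lift 0) .zero).taut_mp₂
      (proves_succ_ne_zero (.add (z.lift 0) (.var 0))) fun _ h hne hx hz => (hne (h hx hz)).elim
  | succ k ih =>
    refine proves_of_cases (t := x)
      ((Proves.eqSomeNumeral_of_eq_zero x (k + 1)).taut_mp₁ fun _ h hx _ => h hx) ?_
    simp only [AFml.lift, ATerm.lift, lift_numeral, lift_eqSomeNumeral]
    have predecessor : Proves PA (.imp (.eq (x.lift 0) (.succ (.var 0)))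
        (.imp (.eq (.add (z.lift 0) (x.lift 0)) (numeral (k + 1)))
          (.eq (.add (z.lift 0) (.var 0)) (numeral k)))) :=
      (proves_succ_add_eq _ _ _ _).taut_mp₂ (proves_succ_inj _ (numeral k))
        fun _ h hinj hx hz => hinj (h hx hz)
    exact predecessor.taut_mp₃ (ih (.var 0) (z.lift 0)) (proves_eqSomeNumeral_succ _ _ k)
      fun _ hpred hsome hsucc hx hz => hsucc hx (hsome (hpred hx hz))

lemma proves_eqSomeNumeral_of_le (x : ATerm) (k : ℕ) :
    Proves PA (.imp (.le x (numeral k)) (eqSomeNumeral x k)) := by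
  have of_witness : Proves PA (.imp
      (.ex (.eq (.add (.var 0) (x.lift 0)) ((numeral k).lift 0))) (eqSomeNumeral x k)) := by
    refine Proves.ex_imp ?_
    rw [lift_numeral, lift_eqSomeNumeral]
    exact proves_eqSomeNumeral_of_add_eq _ _ k
  exact (proves_le_iff x (numeral k)).taut_mp₂ of_witness fun _ hiff h hle => h (hiff.1 hle)

lemma proves_numeral_not_le {a b : ℕ} (h : b < a) :
    Proves PA (.neg (.le (numeral a) (numeral b))) := by
  have impossible : Proves PA
      (.imp (eqSomeNumeral (numeral a) b) (.neg (.le (numeral a) (numeral b)))) :=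
    Proves.eqSomeNumeral_imp fun c hc =>
      (proves_numeral_ne (by omega : a ≠ c)).taut_mp₁ fun _ hne heq => (hne heq).elim
  exact (proves_eqSomeNumeral_of_le _ b).taut_mp₂ impossible
    fun _ hsome hne hle => hne (hsome hle) hle

end PA

/-! ### `Σ₁`-completeness of Peano arithmetic -/

/-- Every true numerical instance of `φ` is provable in `PA`. Together with `RefutableIfFalse`
this is the induction hypothesis in the proof of `Σ₁`-completeness. -/
def ProvableIfTrue (φ : AFml) : Prop := ∀ ρ, φ.Sat ρ → Proves PA (φ.inst ρ)

/-- The negation of every false numerical instance of `φ` is provable in `PA`. -/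
def RefutableIfFalse (φ : AFml) : Prop := ∀ ρ, ¬ φ.Sat ρ → Proves PA (.neg (φ.inst ρ))

/-- The bounded quantification `∀ x ≤ t, φ(x)`. -/
def AFml.ball (t : ATerm) (φ : AFml) : AFml := .all (.imp (.le (.var 0) (t.lift 0)) φ)

/-- The bounded quantification `∃ x ≤ t, φ(x)`. -/
def AFml.bex (t : ATerm) (φ : AFml) : AFml := .ex (.and (.le (.var 0) (t.lift 0)) φ)

lemma AFml.inst_ball (t : ATerm) (φ : AFml) (ρ : ℕ → ℕ) :
    (AFml.ball t φ).inst ρ = .all (.imp (.le (.var 0) (t.inst ρ)) (φ.instTail ρ)) := by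
  have h := t.substAll_liftSub_lift fun n => numeral (ρ n)
  rw [← ATerm.inst, ATerm.lift_inst] at h
  simp only [ball, inst, substAll, h, ATerm.substAll, liftSub, instTail]

lemma AFml.inst_bex (t : ATerm) (φ : AFml) (ρ : ℕ → ℕ) :
    (AFml.bex t φ).inst ρ = .ex (.and (.le (.var 0) (t.inst ρ)) (φ.instTail ρ)) := by
  have h := t.substAll_liftSub_lift fun n => numeral (ρ n)
  rw [← ATerm.inst, ATerm.lift_inst] at h
  simp only [bex, inst, substAll, h, ATerm.substAll, liftSub, instTail]

@[simp] lemma AFml.sat_ball (t : ATerm) (φ : AFml) (ρ : ℕ → ℕ) :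
    (AFml.ball t φ).Sat ρ ↔ ∀ a ≤ t.val ρ, φ.Sat (consEnv a ρ) := by
  simp only [ball, Sat, ATerm.val_lift_consEnv]
  rfl

@[simp] lemma AFml.sat_bex (t : ATerm) (φ : AFml) (ρ : ℕ → ℕ) :
    (AFml.bex t φ).Sat ρ ↔ ∃ a ≤ t.val ρ, φ.Sat (consEnv a ρ) := by
  simp only [bex, Sat, ATerm.val_lift_consEnv]
  rfl

lemma PA.proves_le_imp_instTail {t : ATerm} {φ : AFml} {ρ : ℕ → ℕ}
    (h : ∀ a ≤ t.val ρ, Proves PA (φ.inst (consEnv a ρ))) :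
    Proves PA (.imp (.le (.var 0) (t.inst ρ)) (φ.instTail ρ)) := by
  have le_numeral := Proves.le_congr_imp (.eqRefl (.var 0)) (PA.proves_inst_eq_val t ρ)
  refine le_numeral.taut_mp₃ (PA.proves_eqSomeNumeral_of_le _ _)
    (Proves.eqSomeNumeral_imp (ψ := φ.instTail ρ) fun a ha => ?_)
    fun _ hnum hsome hinst hle => hinst (hsome (hnum hle))
  have replace_numeral := Proves.eqSubst (Γ := PA) (φ.instTail ρ) (numeral a) (.var 0)
  rw [AFml.subst0_numeral_instTail, AFml.subst0_var_instTail] at replace_numeral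
  exact replace_numeral.taut_mp₃ (h a ha) (Proves.eq_symm_imp (.var 0) (numeral a))
    fun _ hsubst hφ hsymm heq => hsubst (hsymm heq) hφ

namespace ProvableIfTrue

variable {φ ψ : AFml}

lemma eq (t s : ATerm) : ProvableIfTrue (.eq t s) := fun ρ (h : t.val ρ = s.val ρ) =>
  (PA.proves_inst_eq_val t ρ).eq_trans (h ▸ (PA.proves_inst_eq_val s ρ).eq_symm)

lemma le (t s : ATerm) : ProvableIfTrue (.le t s) := fun ρ h =>
  .mp (Proves.le_congr_imp (PA.proves_inst_eq_val t ρ).eq_symm (PA.proves_inst_eq_val s ρ).eq_symm)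
    (PA.proves_numeral_le h)

lemma neg (hφ : RefutableIfFalse φ) : ProvableIfTrue (.neg φ) := hφ

lemma and (hφ : ProvableIfTrue φ) (hψ : ProvableIfTrue ψ) : ProvableIfTrue (.and φ ψ) :=
  fun ρ h => (hφ ρ h.1).taut_mp₂ (hψ ρ h.2) fun _ => .intro

lemma or (hφ : ProvableIfTrue φ) (hψ : ProvableIfTrue ψ) : ProvableIfTrue (.or φ ψ)
  | ρ, .inl h => (hφ ρ h).taut_mp₁ fun _ => .inl
  | ρ, .inr h => (hψ ρ h).taut_mp₁ fun _ => .inr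

lemma imp (hφ : RefutableIfFalse φ) (hψ : ProvableIfTrue ψ) : ProvableIfTrue (.imp φ ψ) := by
  intro ρ h
  by_cases hs : φ.Sat ρ
  · exact (hψ ρ (h hs)).taut_mp₁ fun _ h _ => h
  · exact (hφ ρ hs).taut_mp₁ fun _ hn h => (hn h).elim

lemma ex (hφ : ProvableIfTrue φ) : ProvableIfTrue (.ex φ) := fun ρ ⟨a, h⟩ =>
  .mp (.exI (φ.instTail ρ) (numeral a)) (φ.subst0_numeral_instTail ρ a ▸ hφ _ h)

lemma ball (t : ATerm) (hφ : ProvableIfTrue φ) : ProvableIfTrue (.ball t φ) := by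
  intro ρ h
  rw [AFml.sat_ball] at h
  rw [AFml.inst_ball]
  exact .gen (PA.proves_le_imp_instTail fun a ha => hφ _ (h a ha))

end ProvableIfTrue

namespace RefutableIfFalse

variable {φ ψ : AFml}

lemma eq (t s : ATerm) : RefutableIfFalse (.eq t s) := fun ρ h =>
  (PA.proves_numeral_ne h).taut_mp₂
    (Proves.eq_congr_imp (PA.proves_inst_eq_val t ρ) (PA.proves_inst_eq_val s ρ))
    fun _ hne hcongr heq => hne (hcongr heq)

lemma le (t s : ATerm) : RefutableIfFalse (.le t s) := fun ρ h =>
  (PA.proves_numeral_not_le (not_le.1 h)).taut_mp₂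
    (Proves.le_congr_imp (PA.proves_inst_eq_val t ρ) (PA.proves_inst_eq_val s ρ))
    fun _ hnle hcongr hle => hnle (hcongr hle)

lemma neg (hφ : ProvableIfTrue φ) : RefutableIfFalse (.neg φ) := fun ρ h =>
  (hφ ρ (not_not.1 h)).taut_mp₁ fun _ => not_not.2

lemma and (hφ : RefutableIfFalse φ) (hψ : RefutableIfFalse ψ) :
    RefutableIfFalse (.and φ ψ) := by
  intro ρ h
  obtain h | h := not_and_or.1 h
  · exact (hφ ρ h).taut_mp₁ fun _ hn hand => hn hand.1
  · exact (hψ ρ h).taut_mp₁ fun _ hn hand => hn hand.2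

lemma or (hφ : RefutableIfFalse φ) (hψ : RefutableIfFalse ψ) : RefutableIfFalse (.or φ ψ) :=
  fun ρ h => (hφ ρ fun hs => h (.inl hs)).taut_mp₂ (hψ ρ fun hs => h (.inr hs))
    fun _ hnφ hnψ hor => hor.elim hnφ hnψ

lemma imp (hφ : ProvableIfTrue φ) (hψ : RefutableIfFalse ψ) : RefutableIfFalse (.imp φ ψ) :=
  fun ρ h =>
    have ⟨hs, hns⟩ := Classical.not_imp.1 h
    (hφ ρ hs).taut_mp₂ (hψ ρ hns) fun _ hp hn himp => hn (himp hp)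

lemma all (hφ : RefutableIfFalse φ) : RefutableIfFalse (.all φ) := by
  intro ρ h
  obtain ⟨a, h⟩ := not_forall.1 h
  have counterexample := hφ _ h
  rw [← φ.subst0_numeral_instTail] at counterexample
  exact (Proves.allE (φ.instTail ρ) (numeral a)).taut_mp₂ counterexample fun _ => mt

lemma bex (t : ATerm) (hφ : RefutableIfFalse φ) : RefutableIfFalse (.bex t φ) := by
  intro ρ h
  rw [AFml.sat_bex] at h
  push Not at h
  have bounded : Proves PA (.imp (.le (.var 0) (t.inst ρ)) (.neg (φ.instTail ρ))) :=
    PA.proves_le_imp_instTail (φ := .neg φ) fun a ha => hφ _ (h a ha)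
  rw [AFml.inst_bex]
  exact Proves.not_ex (bounded.taut_mp₁ fun _ himp hand => himp hand.1 hand.2)

end RefutableIfFalse

lemma IsDelta0.provable_and_refutable {φ : AFml} (hφ : IsDelta0 φ) :
    ProvableIfTrue φ ∧ RefutableIfFalse φ := by
  induction hφ with
  | eq t s => exact ⟨.eq t s, .eq t s⟩
  | le t s => exact ⟨.le t s, .le t s⟩
  | neg _ ih => exact ⟨.neg ih.2, .neg ih.1⟩
  | and _ _ ih₁ ih₂ => exact ⟨.and ih₁.1 ih₂.1, .and ih₁.2 ih₂.2⟩
  | or _ _ ih₁ ih₂ => exact ⟨.or ih₁.1 ih₂.1, .or ih₁.2 ih₂.2⟩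
  | imp _ _ ih₁ ih₂ => exact ⟨.imp ih₁.2 ih₂.1, .imp ih₁.1 ih₂.2⟩
  | ball t _ ih => exact ⟨.ball t ih.1, .all (.imp (.le _ _) ih.2)⟩
  | bex t _ ih => exact ⟨.ex (.and (.le _ _) ih.1), .bex t ih.2⟩

mutual

theorem IsSigma1.provableIfTrue {φ : AFml} (hφ : IsSigma1 φ) : ProvableIfTrue φ := by
  cases hφ with
  | delta0 h => exact h.provable_and_refutable.1
  | and h₁ h₂ => exact h₁.provableIfTrue.and h₂.provableIfTrue
  | or h₁ h₂ => exact h₁.provableIfTrue.or h₂.provableIfTrue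
  | ex h => exact h.provableIfTrue.ex
  | negPi h => exact .neg h.refutableIfFalse
  | impPiSigma h₁ h₂ => exact .imp h₁.refutableIfFalse h₂.provableIfTrue

theorem IsPi1.refutableIfFalse {φ : AFml} (hφ : IsPi1 φ) : RefutableIfFalse φ := by
  cases hφ with
  | delta0 h => exact h.provable_and_refutable.2
  | and h₁ h₂ => exact h₁.refutableIfFalse.and h₂.refutableIfFalse
  | or h₁ h₂ => exact h₁.refutableIfFalse.or h₂.refutableIfFalse
  | all h => exact h.refutableIfFalse.all
  | negSigma h => exact .neg h.provableIfTrue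
  | impSigmaPi h₁ h₂ => exact .imp h₁.provableIfTrue h₂.refutableIfFalse

end

lemma IsSigma1.proves_of_trueN {φ : AFml} (hφ : IsSigma1 φ) (hclosed : φ.FreeLt 0)
    (htrue : TrueN φ) : Proves PA φ := by
  have h := hφ.provableIfTrue _ htrue
  rwa [AFml.inst, hclosed.substAll_eq_self] at h

/-! ### Diagonalization -/

/-- A `Δ₀` formula expressing `y = ⟨a, b⟩`, following the two cases of `Nat.pair`. -/
def pairF (a b y : ATerm) : AFml :=
  .or (.and (.le (.succ a) b) (.eq y (.add (.mul b b) a)))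
    (.and (.le b a) (.eq y (.add (.add (.mul a a) a) b)))

/-- A `Δ₀` formula expressing that `u` is the `i`-th entry of the sequence which Gödel's `β`
function assigns to `⟨a, b⟩`, i.e. the remainder of `a` modulo `(i + 1) * b + 1`. -/
def betaF (a b i u : ATerm) : AFml :=
  .and (.le u (.mul (.succ i) b))
    (.bex a (.eq (a.lift 0)
      (.add (.mul (.succ (.mul (.succ (i.lift 0)) (b.lift 0))) (.var 0)) (u.lift 0))))

lemma isDelta0_pairF (a b y : ATerm) : IsDelta0 (pairF a b y) :=
  .or (.and (.le _ _) (.eq _ _)) (.and (.le _ _) (.eq _ _))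

lemma isDelta0_betaF (a b i u : ATerm) : IsDelta0 (betaF a b i u) :=
  .and (.le _ _) (.bex _ (.eq _ _))

@[simp] lemma sat_pairF (a b y : ATerm) (ρ : ℕ → ℕ) :
    (pairF a b y).Sat ρ ↔ y.val ρ = Nat.pair (a.val ρ) (b.val ρ) := by
  simp only [pairF, AFml.Sat, ATerm.val, Nat.pair, Nat.succ_le_iff]
  split_ifs with h
  · simp [h, h.not_ge]
  · simp [h, not_lt.1 h]

@[simp] lemma sat_betaF (a b i u : ATerm) (ρ : ℕ → ℕ) :
    (betaF a b i u).Sat ρ ↔ u.val ρ = Nat.beta (Nat.pair (a.val ρ) (b.val ρ)) (i.val ρ) := by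
  simp only [betaF, AFml.Sat, ATerm.val, AFml.sat_bex, ATerm.val_lift_consEnv, Nat.beta,
    Nat.unpair_pair, consEnv]
  generalize (i.val ρ + 1) * b.val ρ = d
  constructor
  · rintro ⟨hu, q, -, hq⟩
    rw [hq, Nat.mul_add_mod, Nat.mod_eq_of_lt (Nat.lt_succ_of_le hu)]
  · rintro hu
    rw [hu]
    exact ⟨Nat.le_of_lt_succ (Nat.mod_lt _ d.succ_pos), _, Nat.div_le_self _ (d + 1),
      (Nat.div_add_mod _ _).symm⟩

lemma exists_beta_eq (f : ℕ → ℕ) (k : ℕ) : ∃ n, ∀ i < k, Nat.beta n i = f i :=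
  ⟨Nat.unbeta ((List.range k).map f), fun i hi => by
    simpa using Nat.beta_unbeta_coe ((List.range k).map f) ⟨i, by simpa using hi⟩⟩

lemma eq_code_numeral_iff (s x : ℕ) :
    s = (numeral x).code ↔ ∃ n, Nat.beta n 0 = ATerm.zero.code ∧
      (∀ i ≤ x, Nat.beta n (i + 1) = Nat.pair 2 (Nat.beta n i)) ∧ s = Nat.beta n x := by
  constructor
  · rintro rfl
    obtain ⟨n, hn⟩ := exists_beta_eq (fun i => (numeral i).code) (x + 2)
    refine ⟨n, hn 0 (by omega), fun i hi => ?_, (hn x (by omega)).symm⟩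
    rw [hn (i + 1) (by omega), hn i (by omega)]
    rfl
  · rintro ⟨n, h_zero, h_succ, rfl⟩
    have (i : ℕ) : i ≤ x → Nat.beta n i = (numeral i).code := by
      induction i with
      | zero => exact fun _ => h_zero
      | succ i ih =>
        intro hi
        rw [h_succ i (by omega), ih (by omega)]
        rfl
    exact this x le_rfl

/-- A `Σ₁` formula expressing that `var 0` is the code of the numeral of `var 1`. The two
leading quantifiers choose the components of a `β`-code for the codes of `0̄, 1̄, …`. -/
def numeralCodeF : AFml :=
  .ex (.ex
    (.and (betaF (.var 1) (.var 0) .zero (numeral ATerm.zero.code))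
      (.and
        (.ball (.var 3) (.bex (.var 2) (.bex (.var 3)
          (.and (betaF (.var 4) (.var 3) (.var 2) (.var 1))
            (.and (betaF (.var 4) (.var 3) (.succ (.var 2)) (.var 0))
              (pairF (numeral 2) (.var 1) (.var 0)))))))
        (betaF (.var 1) (.var 0) (.var 3) (.var 2)))))

lemma isSigma1_numeralCodeF : IsSigma1 numeralCodeF :=
  .ex (.ex (.delta0 (.and (isDelta0_betaF _ _ _ _) (.and
    (.ball _ (.bex _ (.bex _ (.and (isDelta0_betaF _ _ _ _) (.and (isDelta0_betaF _ _ _ _)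
      (isDelta0_pairF _ _ _)))))) (isDelta0_betaF _ _ _ _)))))

lemma freeLt_numeralCodeF : numeralCodeF.FreeLt 2 := by
  simp [numeralCodeF, betaF, pairF, AFml.ball, AFml.bex, AFml.FreeLt, ATerm.FreeLt, ATerm.lift]

lemma sat_numeralCodeF (ρ : ℕ → ℕ) : numeralCodeF.Sat ρ ↔ ρ 0 = (numeral (ρ 1)).code := by
  have beta_le (a b i : ℕ) : Nat.beta (Nat.pair a b) i ≤ a := by
    rw [Nat.beta, Nat.unpair_pair]
    exact Nat.mod_le _ _
  have step_iff (a b i : ℕ) :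
      (∃ u ≤ a, ∃ w ≤ a, u = Nat.beta (Nat.pair a b) i ∧
        w = Nat.beta (Nat.pair a b) (i + 1) ∧ w = Nat.pair 2 u) ↔
      Nat.beta (Nat.pair a b) (i + 1) = Nat.pair 2 (Nat.beta (Nat.pair a b) i) :=
    ⟨by rintro ⟨_, -, _, -, rfl, rfl, h⟩; exact h,
      fun h => ⟨_, beta_le a b i, _, beta_le a b (i + 1), rfl, rfl, h⟩⟩
  simp only [numeralCodeF, AFml.Sat, sat_betaF, sat_pairF, AFml.sat_ball, AFml.sat_bex,
    val_numeral, ATerm.val, consEnv, step_iff]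
  rw [eq_code_numeral_iff]
  constructor
  · rintro ⟨a, b, h_zero, h⟩
    exact ⟨_, h_zero.symm, h⟩
  · rintro ⟨n, h_zero, h⟩
    rw [← Nat.pair_unpair n] at h_zero h
    exact ⟨_, _, h_zero.symm, h⟩

/-- The formula `θ(⟨a, b⟩)`, where `θ` has `⟨a, b⟩` as its free variable `0`, in the `Σ₁` form
`∃ z, z = ⟨a, b⟩ ∧ θ(z)`. -/
def letPair (a b : ATerm) (θ : AFml) : AFml :=
  .ex (.and (pairF (a.lift 0) (b.lift 0) (.var 0)) θ)

@[simp] lemma sat_letPair (a b : ATerm) (θ : AFml) (ρ : ℕ → ℕ) :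
    (letPair a b θ).Sat ρ ↔ θ.Sat (consEnv (Nat.pair (a.val ρ) (b.val ρ)) ρ) := by
  simp only [letPair, AFml.Sat, sat_pairF, ATerm.val_lift_consEnv]
  exact exists_eq_left

lemma IsSigma1.letPair {θ : AFml} (hθ : IsSigma1 θ) (a b : ATerm) : IsSigma1 (letPair a b θ) :=
  .ex (.and (.delta0 (isDelta0_pairF _ _ _)) hθ)

/-- The diagonalization `∀ y (y = ⌜ψ⌝ → ψ(y))` of `ψ`. Unlike `ψ(⌜ψ⌝)`, its code is obtained from
that of `ψ` without arithmetizing substitution. -/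
def diagonalization (ψ : AFml) : AFml := .all (.imp (.eq (.var 0) (gnum ψ)) ψ)

/-- A `Σ₁` formula expressing that `var 0` is the code of the diagonalization of the formula with
code `var 1`. -/
def diagF : AFml :=
  .ex (.and (numeralCodeF.subst2 (.var 0) (.var 2))
    (letPair (numeral (ATerm.var 0).code) (.var 0)
      (letPair (numeral 0) (.var 0)
        (letPair (.var 0) (.var 4)
          (letPair (numeral 5) (.var 0)
            (pairF (numeral 6) (.var 0) (.var 5)))))))

lemma isSigma1_diagF : IsSigma1 diagF :=
  .ex (.and (isSigma1_numeralCodeF.substAll _) (.letPair (.letPair (.letPair (.letPair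
    (.delta0 (isDelta0_pairF _ _ _)) _ _) _ _) _ _) _ _))

lemma freeLt_diagF : diagF.FreeLt 2 := by
  have h : (numeralCodeF.subst2 (.var 0) (.var 2)).FreeLt 3 := by
    refine freeLt_numeralCodeF.substAll fun n hn => ?_
    interval_cases n <;> simp [subst2Env, ATerm.FreeLt]
  simp [diagF, letPair, pairF, h, AFml.FreeLt, ATerm.FreeLt, ATerm.lift]

lemma sat_diagF (ψ : AFml) (y : ℕ) (ρ : ℕ → ℕ) :
    diagF.Sat (consEnv y (consEnv ψ.code ρ)) ↔ y = (diagonalization ψ).code := by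
  simp only [diagF, AFml.Sat, AFml.sat_subst2, sat_numeralCodeF, sat_letPair, sat_pairF,
    val_numeral, ATerm.val, consEnv]
  exact exists_eq_left

lemma freeLt_diagonalization {ψ : AFml} (hψ : ψ.FreeLt 1) : (diagonalization ψ).FreeLt 0 :=
  ⟨⟨Nat.one_pos, freeLt_numeral _ _⟩, hψ⟩

lemma sat_diagonalization (ψ : AFml) (ρ : ℕ → ℕ) :
    (diagonalization ψ).Sat ρ ↔ ψ.Sat (consEnv ψ.code ρ) := by
  simp only [diagonalization, AFml.Sat, ATerm.val, gnum, val_numeral]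
  exact forall_eq

lemma exists_isPi1_fixedPoint {ψ : AFml} (hψ : IsPi1 ψ) (hfree : ψ.FreeLt 1) :
    ∃ φ, IsPi1 φ ∧ φ.FreeLt 0 ∧ (TrueN φ ↔ TrueN (ψ.appNum φ)) := by
  let θ : AFml := .all (.imp diagF ψ)
  have hθ : IsPi1 θ := .all (.impSigmaPi isSigma1_diagF hψ)
  refine ⟨diagonalization θ, .all (.impSigmaPi (.delta0 (.eq _ _)) hθ),
    freeLt_diagonalization ⟨freeLt_diagF, hfree.mono one_le_two⟩, ?_⟩
  rw [trueN_appNum, TrueN, sat_diagonalization]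
  simp only [θ, AFml.Sat, sat_diagF, forall_eq]
  exact hfree.sat_congr fun n hn => by rw [Nat.lt_one_iff.1 hn]; rfl

/-! ### Interpretations and completeness of `T` -/

/-- The arithmetical interpretation based on `P` which sends the propositional variable `i`
to `v i`. -/
def interp (P : AFml) (v : ℕ → AFml) : MFml → AFml
  | .var i => v i
  | .bot => botFml
  | .neg A => .neg (interp P v A)
  | .and A B => .and (interp P v A) (interp P v B)
  | .or A B => .or (interp P v A) (interp P v B)
  | .imp A B => .imp (interp P v A) (interp P v B)
  | .box A => P.appNum (interp P v A)

/-- Syntactic completeness: every sentence is provable or refutable. -/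
def SyntacticallyComplete (Tax : Set AFml) : Prop :=
  ∀ φ : AFml, φ.FreeLt 0 → Proves Tax φ ∨ Proves Tax (.neg φ)

section

variable {Tax : Set AFml} {P φ ψ : AFml} {m : ℕ}

lemma isInterp_interp {v : ℕ → AFml} (hv : ∀ i, (v i).FreeLt 0) : IsInterp P (interp P v) :=
  ⟨hv, rfl, fun _ => rfl, fun _ _ => rfl, fun _ _ => rfl, fun _ _ => rfl, fun _ => rfl⟩

lemma interp_boxIter (P : AFml) (v : ℕ → AFml) (m : ℕ) (A : MFml) :
    interp P v (boxIter m A) = iterPred P m (interp P v A) := by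
  induction m with
  | zero => rfl
  | succ m ih => simp only [boxIter, interp, iterPred, ih]

lemma proves_imp_iterPred_of_mem_PL (hPL : MFml.imp (.var 0) (boxIter m (.var 0)) ∈ PL Tax P)
    (hφ : φ.FreeLt 0) : Proves Tax (.imp φ (iterPred P m φ)) := by
  simpa only [interp, interp_boxIter] using
    hPL (interp P fun _ => φ) (isInterp_interp fun _ => hφ)

lemma IsSigma1.iterPred (hP : IsSigma1 P) (hm : 1 ≤ m) (φ : AFml) :
    IsSigma1 (iterPred P m φ) := by
  obtain ⟨k, rfl⟩ := Nat.exists_eq_add_of_le' hm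
  exact hP.substAll _

lemma AFml.FreeLt.iterPred (hP : P.FreeLt 1) (hm : 1 ≤ m) (φ : AFml) :
    (iterPred P m φ).FreeLt 0 := by
  obtain ⟨k, rfl⟩ := Nat.exists_eq_add_of_le' hm
  exact hP.appNum _

namespace Sigma1Sound

lemma not_proves_neg (hsound : Sigma1Sound Tax) (hφ : Proves Tax φ) :
    ¬ Proves Tax (.neg φ) := by
  intro hnφ
  have absurdity : Proves Tax botFml := hφ.taut_mp₂ hnφ fun _ h hn => (hn h).elim
  exact absurd (hsound botFml (.delta0 (.eq _ _)) ⟨trivial, trivial⟩ absurdity) Nat.zero_ne_one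

lemma proves_iff_trueN (hsound : Sigma1Sound Tax) (hext : PA ⊆ Tax) (hφ : IsSigma1 φ)
    (hclosed : φ.FreeLt 0) : Proves Tax φ ↔ TrueN φ :=
  ⟨hsound φ hφ hclosed, fun h => (hφ.proves_of_trueN hclosed h).mono hext⟩

lemma proves_or_iff (hsound : Sigma1Sound Tax) (hext : PA ⊆ Tax)
    (hφ : IsSigma1 φ) (hφ_closed : φ.FreeLt 0) (hψ : IsSigma1 ψ) (hψ_closed : ψ.FreeLt 0) :
    Proves Tax (.or φ ψ) ↔ Proves Tax φ ∨ Proves Tax ψ := by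
  rw [hsound.proves_iff_trueN hext (hφ.or hψ) ⟨hφ_closed, hψ_closed⟩,
    hsound.proves_iff_trueN hext hφ hφ_closed, hsound.proves_iff_trueN hext hψ hψ_closed]
  rfl

lemma not_syntacticallyComplete (hsound : Sigma1Sound Tax) (hext : PA ⊆ Tax) (hP_sigma : IsSigma1 P)
    (hfree : P.FreeLt 1) (hP : ∀ φ, TrueN (P.appNum φ) ↔ Proves Tax φ) :
    ¬ SyntacticallyComplete Tax := by
  intro hcomplete
  obtain ⟨G, hG_pi, hG_closed, hG⟩ := exists_isPi1_fixedPoint (.negSigma hP_sigma) hfree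
  replace hG : TrueN G ↔ ¬ Proves Tax G := hG.trans (not_congr (hP G))
  have proves_neg_iff : Proves Tax (.neg G) ↔ ¬ TrueN G :=
    hsound.proves_iff_trueN hext (.negPi hG_pi) hG_closed
  obtain h | h := hcomplete G hG_closed
  · exact hsound.not_proves_neg h (proves_neg_iff.2 fun htrue => hG.1 htrue h)
  · exact proves_neg_iff.1 h (hG.2 fun hG_proved => hsound.not_proves_neg hG_proved h)

end Sigma1Sound

namespace IsProvPred

lemma proves_of_trueN_appNum (hP : IsProvPred Tax P) (hP_sigma : IsSigma1 P)
    (h : TrueN (P.appNum φ)) : Proves Tax φ :=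
  (hP.2 φ).2 (IsSigma1.proves_of_trueN (hP_sigma.substAll _) (hP.1.appNum φ) h)

lemma trueN_appNum_iff (hP : IsProvPred Tax P) (hP_sigma : IsSigma1 P) (hext : PA ⊆ Tax)
    (hsound : Sigma1Sound Tax) (φ : AFml) : TrueN (P.appNum φ) ↔ Proves Tax φ :=
  ⟨hP.proves_of_trueN_appNum hP_sigma,
    fun h => hsound _ (hP_sigma.substAll _) (hP.1.appNum φ) (((hP.2 φ).1 h).mono hext)⟩

lemma proves_of_proves_iterPred (hP : IsProvPred Tax P) (hP_sigma : IsSigma1 P)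
    (hsound : Sigma1Sound Tax) (h : Proves Tax (iterPred P m φ)) : Proves Tax φ := by
  induction m with
  | zero => exact h
  | succ m ih =>
    have true_iterPred : TrueN (P.appNum (iterPred P m φ)) :=
      hsound _ (hP_sigma.substAll _) (hP.1.appNum _) h
    exact ih (hP.proves_of_trueN_appNum hP_sigma true_iterPred)

lemma syntacticallyComplete_of_mem_PL (hP : IsProvPred Tax P) (hP_sigma : IsSigma1 P)
    (hext : PA ⊆ Tax) (hsound : Sigma1Sound Tax) (hm : 1 ≤ m)
    (hPL : MFml.imp (.var 0) (boxIter m (.var 0)) ∈ PL Tax P) : SyntacticallyComplete Tax := by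
  intro φ hφ
  have reflects {ψ : AFml} : Proves Tax (iterPred P m ψ) → Proves Tax ψ :=
    hP.proves_of_proves_iterPred hP_sigma hsound
  have disjunction : Proves Tax (.or (iterPred P m φ) (iterPred P m (.neg φ))) :=
    (proves_imp_iterPred_of_mem_PL hPL hφ).taut_mp₂
      (proves_imp_iterPred_of_mem_PL hPL (φ := .neg φ) hφ)
      fun v himp himp_neg => (em (φ.evalProp v)).imp himp himp_neg
  exact ((hsound.proves_or_iff hext (hP_sigma.iterPred hm _) (hP.1.iterPred hm _)
    (hP_sigma.iterPred hm _) (hP.1.iterPred hm _)).1 disjunction).imp reflects reflects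

end IsProvPred

end

theorem statement_5_general (Tax : Set AFml) (hext : PA ⊆ Tax) (hsound : Sigma1Sound Tax)
    (m : ℕ) (hm : 1 ≤ m) :
    ¬ ∃ P : AFml, IsSigma1 P ∧ IsProvPred Tax P ∧
        MFml.imp (.var 0) (boxIter m (.var 0)) ∈ PL Tax P := by
  rintro ⟨P, hP_sigma, hP, hPL⟩
  exact hsound.not_syntacticallyComplete hext hP_sigma hP.1
    (hP.trueN_appNum_iff hP_sigma hext hsound)
    (hP.syntacticallyComplete_of_mem_PL hP_sigma hext hsound hm hPL)

/-- Suppose `T` is `Σ₁`-sound. For each `m ≥ 1`, there exists no `Σ₁`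
provability predicate `PR_T(x)` of `T` such that `p → □ᵐp` belongs to `PL(PR_T)`. -/
theorem statement_5 (Tax : Set AFml) (hext : PA ⊆ Tax)
    (hcons : ¬ Proves Tax botFml) (hpr : PrAxiomatized Tax)
    (hsound : Sigma1Sound Tax)
    (m : ℕ) (hm : 1 ≤ m) :
    ¬ ∃ P : AFml, IsSigma1 P ∧ IsProvPred Tax P ∧
        MFml.imp (.var 0) (boxIter m (.var 0)) ∈ PL Tax P :=
  statement_5_general Tax hext hsound m hm

end PLN
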